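/- Let (U, W, υ, φ) be a topological gluing datum over an index set I, with glued space Q and canonical maps ι i : U i → Q. Then for all i, j ∈ I and every subset V ⊆ U i, one has the preimage formula (ι j)⁻¹ (ι i '' V) = (υ j i) '' ((φ i j) '' ((υ i j)⁻¹ V)). -/

import Mathlib

open Set Function Topology

/-- The gluing relation on the sigma type `Σ i, U i` associated with a gluing datum:
`⟨i, x⟩ ~ ⟨j, y⟩` iff there exists `u : W i j` with `υ i j u = x` and `υ j i (φ i j u) = y`. -/
def glueRel {I : Type*} (U : I → Type*) (W : I → I → Type*)
    (υ : ∀ i j, W i j → U i) (φ : ∀ i j, W i j → W j i) :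
    (Σ i, U i) → (Σ i, U i) → Prop :=
  fun p q => ∃ u : W p.1 q.1, υ p.1 q.1 u = p.2 ∧ υ q.1 p.1 (φ p.1 q.1 u) = q.2

/-- The glued space: the quotient of `Σ i, U i` by the gluing relation, equipped with the
quotient topology. -/
abbrev Glued {I : Type*} (U : I → Type*) (W : I → I → Type*)
    (υ : ∀ i j, W i j → U i) (φ : ∀ i j, W i j → W j i) : Type _ :=
  Quot (glueRel U W υ φ)

/-- The canonical map `U i → Q` into the glued space. -/
def glueι {I : Type*} (U : I → Type*) (W : I → I → Type*)
    (υ : ∀ i j, W i j → U i) (φ : ∀ i j, W i j → W j i) (i : I) :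
    U i → Glued U W υ φ :=
  fun x => Quot.mk _ ⟨i, x⟩

section

variable {I : Type*} {U : I → Type*} {W : I → I → Type*}
  {υ : ∀ i j, W i j → U i} {φ : ∀ i j, W i j → W j i}

theorem symm_glueRel (hφφ : ∀ i j (u : W i j), φ j i (φ i j u) = u) :
    Std.Symm (glueRel U W υ φ) := by
  constructor
  rintro ⟨i, x⟩ ⟨j, y⟩ ⟨u, hx, hy⟩
  exact ⟨φ i j u, hy, (congrArg (υ i j) (hφφ i j u)).trans hx⟩

theorem isTrans_glueRel
    (hcoc : ∀ i j k (u : W i j) (v : W j k),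
      υ j i (φ i j u) = υ j k v →
      ∃ w : W i k, υ i k w = υ i j u ∧ υ k i (φ i k w) = υ k j (φ j k v)) :
    IsTrans (Σ i, U i) (glueRel U W υ φ) := by
  constructor
  rintro ⟨i, x⟩ ⟨j, y⟩ ⟨k, z⟩ ⟨u, hx, hy⟩ ⟨v, hy', hz⟩
  obtain ⟨w, hwx, hwz⟩ := hcoc i j k u v (hy.trans hy'.symm)
  exact ⟨w, hwx.trans hx, hwz.trans hz⟩

theorem equivalence_glueRel (hsurj : ∀ i, Surjective (υ i i))
    (hφφ : ∀ i j (u : W i j), φ j i (φ i j u) = u)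
    (hcoc : ∀ i j k (u : W i j) (v : W j k),
      υ j i (φ i j u) = υ j k v →
      ∃ w : W i k, υ i k w = υ i j u ∧ υ k i (φ i k w) = υ k j (φ j k v)) :
    Equivalence (glueRel U W υ φ) := by
  have symm := (symm_glueRel (υ := υ) hφφ).symm
  have trans := (isTrans_glueRel hcoc).trans
  refine ⟨?_, symm _ _, trans _ _ _⟩
  -- A symmetric and transitive relation is reflexive once each point is related to some point.
  rintro ⟨i, x⟩
  obtain ⟨u, hu⟩ := hsurj i x
  have related : glueRel U W υ φ ⟨i, x⟩ ⟨i, υ i i (φ i i u)⟩ := ⟨u, hu, rfl⟩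
  exact trans _ _ _ related (symm _ _ related)

theorem glueι_eq_glueι_iff (h : Equivalence (glueRel U W υ φ)) {i j : I} {x : U i} {y : U j} :
    glueι U W υ φ i x = glueι U W υ φ j y ↔
      ∃ u : W i j, υ i j u = x ∧ υ j i (φ i j u) = y :=
  h.quot_mk_eq_iff ⟨i, x⟩ ⟨j, y⟩

end

theorem glueι_preimage_image_general {I : Type*} (U : I → Type*) (W : I → I → Type*)
    (υ : ∀ i j, W i j → U i) (φ : ∀ i j, W i j → W j i)
    (hsurj : ∀ i, Surjective (υ i i))
    (hφφ : ∀ i j (u : W i j), φ j i (φ i j u) = u)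
    (hcoc : ∀ i j k (u : W i j) (v : W j k),
      υ j i (φ i j u) = υ j k v →
      ∃ w : W i k, υ i k w = υ i j u ∧ υ k i (φ i k w) = υ k j (φ j k v))
    (i j : I) (V : Set (U i)) :
    (glueι U W υ φ j) ⁻¹' ((glueι U W υ φ i) '' V) =
      (υ j i) '' ((φ i j) '' ((υ i j) ⁻¹' V)) := by
  have hequiv := equivalence_glueRel hsurj hφφ hcoc
  ext y
  calc y ∈ glueι U W υ φ j ⁻¹' (glueι U W υ φ i '' V)
      ↔ ∃ x ∈ V, glueι U W υ φ i x = glueι U W υ φ j y := Iff.rfl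
    _ ↔ ∃ x ∈ V, ∃ u : W i j, υ i j u = x ∧ υ j i (φ i j u) = y := by
      simp only [glueι_eq_glueι_iff hequiv]
    _ ↔ ∃ u : W i j, υ i j u ∈ V ∧ υ j i (φ i j u) = y := by aesop
    _ ↔ y ∈ υ j i '' (φ i j '' (υ i j ⁻¹' V)) := by
      simp only [mem_image, mem_preimage, exists_exists_and_eq_and]

/-- Preimage formula for the canonical maps into the glued space. -/
theorem glueι_preimage_image {I : Type*}
    (U : I → Type*) [∀ i, TopologicalSpace (U i)]
    (W : I → I → Type*) [∀ i j, TopologicalSpace (W i j)]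
    (υ : ∀ i j, W i j → U i) (φ : ∀ i j, W i j → W j i)
    (hυc : ∀ i j, Continuous (υ i j)) (hφc : ∀ i j, Continuous (φ i j))
    (hdiag_bij : ∀ i, Function.Bijective (υ i i))
    (hdiag : ∀ i (u : W i i), υ i i (φ i i u) = υ i i u)
    (hφφ : ∀ i j (u : W i j), φ j i (φ i j u) = u)
    (hcoc : ∀ i j k (u : W i j) (v : W j k),
      υ j i (φ i j u) = υ j k v →
      ∃ w : W i k, υ i k w = υ i j u ∧ υ k i (φ i k w) = υ k j (φ j k v))
    (i j : I) (V : Set (U i)) :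
    (glueι U W υ φ j) ⁻¹' ((glueι U W υ φ i) '' V) =
      (υ j i) '' ((φ i j) '' ((υ i j) ⁻¹' V)) :=
  glueι_preimage_image_general U W υ φ (fun i => (hdiag_bij i).surjective) hφφ hcoc i j V
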